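/- Let t ≤ t' be integers, let L₁ be a generic element of K_{t,⪰} and L₂ a generic element of K_{t',⪰}. Then Ker M_{⌊t/2⌋}(L₁) ⊆ Ker M_{⌊t'/2⌋}(L₂); i.e. with N_t denoting the common kernel of generic elements of K_{t,⪰}, one has N_t ⊆ N_{t'} whenever t ≤ t'. -/

import Mathlib

open MvPolynomial

noncomputable section

/-- The polynomial ring `ℝ[x₁,…,xₙ]`. -/
abbrev MP (n : ℕ) := MvPolynomial (Fin n) ℝ

/-- The total degree `|α|` of a monomial exponent `α`. -/
def mdeg {n : ℕ} (α : Fin n →₀ ℕ) : ℕ := α.sum fun _ e => e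

/-- The subspace `ℝ[x]_t` of polynomials of total degree at most `t`. -/
abbrev RxT (n t : ℕ) : Submodule ℝ (MP n) := restrictTotalDegree (Fin n) ℝ t

/-- The kernel of the moment matrix `M_s(L)`: polynomials `p` of degree at most `s` such that
`L(p·x^β) = 0` for all monomials `x^β` of degree at most `s`. -/
def momKer {n : ℕ} (L : Module.Dual ℝ (MP n)) (s : ℕ) : Set (MP n) :=
  {p | p.totalDegree ≤ s ∧ ∀ β : Fin n →₀ ℕ, mdeg β ≤ s → L (p * monomial β 1) = 0}

/-- Positive semidefiniteness of the moment matrix `M_t(L)`: `L(p²) ≥ 0` for all `p ∈ ℝ[x]_t`. -/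
def momPSD {n : ℕ} (L : Module.Dual ℝ (MP n)) (t : ℕ) : Prop :=
  ∀ p : MP n, p.totalDegree ≤ t → 0 ≤ L (p * p)

/-- The bilinear/moment form of order `s` associated to `L`, as a map `ℝ[x]_s → (ℝ[x]_s)*`;
its matrix in the monomial basis is the moment matrix `M_s(L)`. -/
def momBil {n : ℕ} (L : Module.Dual ℝ (MP n)) (s : ℕ) :
    RxT n s →ₗ[ℝ] Module.Dual ℝ (RxT n s) :=
  LinearMap.mk₂ ℝ (fun p q => L ((p : MP n) * (q : MP n)))
    (fun p p' q => by simp [add_mul])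
    (fun c p q => by simp [smul_mul_assoc])
    (fun p q q' => by simp [mul_add])
    (fun c p q => by simp [mul_smul_comm])

/-- The rank of the moment matrix `M_s(L)`. -/
def momRank {n : ℕ} (L : Module.Dual ℝ (MP n)) (s : ℕ) : ℕ :=
  Module.finrank ℝ (LinearMap.range (momBil L s))

/-- The column of the moment matrix `M_s(L)` indexed by the monomial `β`. -/
def momCol {n : ℕ} (L : Module.Dual ℝ (MP n)) (s : ℕ) (β : Fin n →₀ ℕ) :
    {α : Fin n →₀ ℕ // mdeg α ≤ s} → ℝ :=
  fun α => L (monomial (α.1 + β) 1)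

/-- `G^⊥`: linear functionals vanishing on the set `G`. -/
def annih {n : ℕ} (G : Set (MP n)) : Submodule ℝ (Module.Dual ℝ (MP n)) :=
  (Submodule.span ℝ G).dualAnnihilator

/-- The projection `π_s` sending a linear functional to its restriction to `ℝ[x]_s`. -/
def projDual (n s : ℕ) : Module.Dual ℝ (MP n) →ₗ[ℝ] Module.Dual ℝ (RxT n s) :=
  (RxT n s).subtype.dualMap

/-- `dim π_s(G^⊥)`. -/
def dimProj {n : ℕ} (s : ℕ) (G : Set (MP n)) : ℕ :=
  Module.finrank ℝ (Submodule.map (projDual n s) (annih G))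

/-- The one-degree prolongation `S⁺ = S ∪ x₁S ∪ … ∪ xₙS` of a set of polynomials. -/
def plusOp {n : ℕ} (G : Set (MP n)) : Set (MP n) :=
  G ∪ ⋃ i : Fin n, (fun p => X i * p) '' G

/-- The set `H_t = {x^α h_j : |α| + deg h_j ≤ t}` of prolongations of the generators. -/
def Hset {n m : ℕ} (h : Fin m → MP n) (t : ℕ) : Set (MP n) :=
  {p | ∃ (α : Fin n →₀ ℕ) (j : Fin m), mdeg α + (h j).totalDegree ≤ t ∧ p = monomial α 1 * h j}

/-- The cone `K_{t,⪰}` of linear functionals vanishing on `H_t` with `M_{⌊t/2⌋}(L) ⪰ 0`. -/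
def Kpos {n m : ℕ} (h : Fin m → MP n) (t : ℕ) : Set (Module.Dual ℝ (MP n)) :=
  {L | (∀ g ∈ Hset h t, L g = 0) ∧ momPSD L (t / 2)}

/-- `L*` is generic in `K_{t,⪰}`: it belongs to `K_{t,⪰}` and its moment matrix
`M_{⌊t/2⌋}(L*)` has maximum rank over `K_{t,⪰}`. -/
def Generic {n m : ℕ} (h : Fin m → MP n) (t : ℕ) (Ls : Module.Dual ℝ (MP n)) : Prop :=
  Ls ∈ Kpos h t ∧ ∀ L ∈ Kpos h t, momRank L (t / 2) ≤ momRank Ls (t / 2)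

/-- `W_t = {x^α g : |α| ≤ ⌊t/2⌋, g ∈ N_t}`, with `N_t = Ker M_{⌊t/2⌋}(L*)` for `L*` generic. -/
def Wset {n m : ℕ} (h : Fin m → MP n) (t : ℕ) (Ls : Module.Dual ℝ (MP n)) : Set (MP n) :=
  {p | ∃ (α : Fin n →₀ ℕ) (g : MP n), mdeg α ≤ t / 2 ∧ g ∈ momKer Ls (t / 2) ∧
    p = monomial α 1 * g}

/-- The real radical `√[ℝ]I` of an ideal `I`. -/
def realRad {n : ℕ} (I : Ideal (MP n)) : Set (MP n) :=
  {p | ∃ m : ℕ, 0 < m ∧ ∃ (k : ℕ) (q : Fin k → MP n), p ^ (2 * m) + ∑ j, q j ^ 2 ∈ I}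

/-- A set of monomials closed under taking divisions. -/
def DivClosed {n : ℕ} (B : Set (Fin n →₀ ℕ)) : Prop :=
  ∀ a ∈ B, ∀ a' : Fin n →₀ ℕ, a' ≤ a → a' ∈ B

/-- A set of monomials connected to 1: each `m ∈ B` is a product `m = m₁⋯m_k` with `m₁ = 1`
and all partial products `m₁⋯m_h ∈ B` (written additively on exponents). -/
def ConnectedToOne {n : ℕ} (B : Set (Fin n →₀ ℕ)) : Prop :=
  ∀ a ∈ B, ∃ (k : ℕ) (c : Fin (k + 1) → (Fin n →₀ ℕ)),
    c 0 = 0 ∧ (∀ j : Fin (k + 1), (∑ i ∈ Finset.univ.filter (· ≤ j), c i) ∈ B) ∧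
    (∑ i, c i) = a

/-- `Span_ℝ(B)` for a set `B` of monomials. -/
def spanMon {n : ℕ} (B : Set (Fin n →₀ ℕ)) : Submodule ℝ (MP n) :=
  Submodule.span ℝ ((fun a => (monomial a 1 : MP n)) '' B)

/-- The border `∂B = B⁺ \ B` of a set of monomials. -/
def borderSet {n : ℕ} (B : Set (Fin n →₀ ℕ)) : Set (Fin n →₀ ℕ) :=
  {a | a ∉ B ∧ ∃ i : Fin n, ∃ b ∈ B, a = b + Finsupp.single i 1}

end

/-!
A positive semidefinite form `B` satisfies `B x x = 0` only for `x ∈ ker B`, so the kernel of a sum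
of two such forms is the intersection of their kernels. If `L₁` is generic and `L ∈ K_{t,⪰}`, then
`L₁ + L ∈ K_{t,⪰}` has a moment matrix of rank at most that of `L₁`, whence its kernel is all of
`Ker M(L₁)`, and therefore `Ker M(L₁) ⊆ Ker M(L)`. This applies to every `L ∈ K_{t',⪰} ⊆ K_{t,⪰}`;
moreover the condition `L(p²) = 0` does not involve the order of the moment matrix, so kernel
elements at order `⌊t/2⌋` remain in the kernel at order `⌊t'/2⌋`.
-/

section LinearAlgebra

theorem ker_eq_ker_of_le_of_finrank_range_le {K V W W' : Type*} [DivisionRing K]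
    [AddCommGroup V] [Module K V] [FiniteDimensional K V]
    [AddCommGroup W] [Module K W] [AddCommGroup W'] [Module K W']
    {f : V →ₗ[K] W} {g : V →ₗ[K] W'} (hker : LinearMap.ker f ≤ LinearMap.ker g)
    (hrank : Module.finrank K (LinearMap.range f) ≤ Module.finrank K (LinearMap.range g)) :
    LinearMap.ker f = LinearMap.ker g := by
  refine Submodule.eq_of_le_of_finrank_le hker ?_
  have hf := f.finrank_range_add_finrank_ker
  have hg := g.finrank_range_add_finrank_ker
  omega

theorem ker_add_eq_inf_of_isPosSemidef {R M : Type*} [CommRing R] [LinearOrder R]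
    [IsStrictOrderedRing R] [AddCommGroup M] [Module R M] {B C : M →ₗ[R] M →ₗ[R] R}
    (hB : B.IsPosSemidef) (hC : C.IsPosSemidef) :
    LinearMap.ker (B + C) = LinearMap.ker B ⊓ LinearMap.ker C := by
  ext x
  rw [Submodule.mem_inf,
    ← LinearMap.BilinForm.apply_apply_same_eq_zero_iff _ (hB.add hC).nonneg (hB.add hC).isSymm,
    ← LinearMap.BilinForm.apply_apply_same_eq_zero_iff _ hB.nonneg hB.isSymm,
    ← LinearMap.BilinForm.apply_apply_same_eq_zero_iff _ hC.nonneg hC.isSymm]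
  exact add_eq_zero_iff_of_nonneg (hB.nonneg x) (hC.nonneg x)

theorem ker_le_ker_of_isPosSemidef_of_finrank_range_add_le {K V : Type*} [Field K] [LinearOrder K]
    [IsStrictOrderedRing K] [AddCommGroup V] [Module K V] [FiniteDimensional K V]
    {B C : V →ₗ[K] V →ₗ[K] K} (hB : B.IsPosSemidef) (hC : C.IsPosSemidef)
    (hrank : Module.finrank K (LinearMap.range (B + C)) ≤ Module.finrank K (LinearMap.range B)) :
    LinearMap.ker B ≤ LinearMap.ker C := by
  have hinf := ker_add_eq_inf_of_isPosSemidef hB hC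
  have hker : LinearMap.ker (B + C) = LinearMap.ker B :=
    ker_eq_ker_of_le_of_finrank_range_le (hinf.trans_le inf_le_left) hrank
  exact inf_eq_left.1 (hinf.symm.trans hker)

end LinearAlgebra

theorem restrictTotalDegree_le_iff {σ R : Type*} [CommSemiring R] {s : ℕ}
    {N : Submodule R (MvPolynomial σ R)} :
    restrictTotalDegree σ R s ≤ N ↔
      ∀ β : σ →₀ ℕ, (β.sum fun _ e => e) ≤ s → monomial β 1 ∈ N := by
  rw [restrictTotalDegree, restrictSupport_eq_span, Submodule.span_le, Set.image_subset_iff]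
  rfl

section MomentMatrix

variable {n s : ℕ} {L L' : Module.Dual ℝ (MP n)} {p : MP n}

theorem momBil_add (L L' : Module.Dual ℝ (MP n)) (s : ℕ) :
    momBil (L + L') s = momBil L s + momBil L' s :=
  rfl

theorem momPSD.isPosSemidef_momBil (hL : momPSD L s) : (momBil L s).IsPosSemidef where
  eq p q := congrArg L (mul_comm (p : MP n) q)
  nonneg p := hL p ((mem_restrictTotalDegree _ _ _).1 p.2)

theorem momPSD.add (hL : momPSD L s) (hL' : momPSD L' s) : momPSD (L + L') s :=
  fun p hp => add_nonneg (hL p hp) (hL' p hp)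

theorem momPSD.anti {s' : ℕ} (hL : momPSD L s') (hs : s ≤ s') : momPSD L s :=
  fun p hp => hL p (hp.trans hs)

theorem momKer_eq_map_ker_momBil (L : Module.Dual ℝ (MP n)) (s : ℕ) :
    momKer L s = (LinearMap.ker (momBil L s)).map (RxT n s).subtype := by
  ext p
  have vanishing_iff : (∀ β : Fin n →₀ ℕ, mdeg β ≤ s → L (p * monomial β 1) = 0) ↔
      ∀ q ∈ RxT n s, L (p * q) = 0 :=
    (restrictTotalDegree_le_iff (N := LinearMap.ker (L ∘ₗ LinearMap.mulLeft ℝ p))).symm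
  simp only [momKer, Set.mem_ofPred_eq, vanishing_iff, ← mem_restrictTotalDegree]
  simp [LinearMap.ext_iff, momBil, and_comm]

theorem momPSD.mem_momKer_iff (hL : momPSD L s) :
    p ∈ momKer L s ↔ p.totalDegree ≤ s ∧ L (p * p) = 0 := by
  have hB := hL.isPosSemidef_momBil
  have mem_ker_iff (q : RxT n s) : q ∈ LinearMap.ker (momBil L s) ↔ L ((q : MP n) * q) = 0 :=
    (LinearMap.BilinForm.apply_apply_same_eq_zero_iff _ hB.nonneg hB.isSymm).symm
  simp [momKer_eq_map_ker_momBil, -LinearMap.mem_ker, mem_ker_iff, mem_restrictTotalDegree,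
    and_comm]

theorem momPSD.momKer_mono {s' : ℕ} (hL : momPSD L s') (hs : s ≤ s') :
    momKer L s ⊆ momKer L s' := by
  intro p hp
  obtain ⟨hdeg, hsq⟩ := (hL.anti hs).mem_momKer_iff.1 hp
  exact hL.mem_momKer_iff.2 ⟨hdeg.trans hs, hsq⟩

end MomentMatrix

section TruncatedCone

variable {n m t : ℕ} {h : Fin m → MP n} {L L' : Module.Dual ℝ (MP n)}

theorem Hset_mono (h : Fin m → MP n) : Monotone (Hset h) := by
  rintro t t' htt' _ ⟨α, j, hdeg, rfl⟩
  exact ⟨α, j, hdeg.trans htt', rfl⟩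

theorem Kpos_anti (h : Fin m → MP n) : Antitone (Kpos h) :=
  fun _ _ htt' _ hL =>
    ⟨fun g hg => hL.1 g (Hset_mono h htt' hg), hL.2.anti (Nat.div_le_div_right htt')⟩

theorem add_mem_Kpos (hL : L ∈ Kpos h t) (hL' : L' ∈ Kpos h t) : L + L' ∈ Kpos h t :=
  ⟨fun g hg => by rw [LinearMap.add_apply, hL.1 g hg, hL'.1 g hg, add_zero], hL.2.add hL'.2⟩

theorem Generic.momKer_subset (hL : Generic h t L) (hL' : L' ∈ Kpos h t) :
    momKer L (t / 2) ⊆ momKer L' (t / 2) := by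
  have hrank : momRank (L + L') (t / 2) ≤ momRank L (t / 2) := hL.2 _ (add_mem_Kpos hL.1 hL')
  rw [momRank, momBil_add] at hrank
  have hker : LinearMap.ker (momBil L (t / 2)) ≤ LinearMap.ker (momBil L' (t / 2)) :=
    ker_le_ker_of_isPosSemidef_of_finrank_range_add_le hL.1.2.isPosSemidef_momBil
      hL'.2.isPosSemidef_momBil hrank
  simp only [momKer_eq_map_ker_momBil]
  exact Submodule.map_mono hker

end TruncatedCone

theorem momKer_mono_of_generic_general {n m t t' : ℕ} (h : Fin m → MP n) (htt' : t ≤ t')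
    (L₁ L₂ : Module.Dual ℝ (MP n)) (h₁ : Generic h t L₁) (h₂ : L₂ ∈ Kpos h t') :
    momKer L₁ (t / 2) ⊆ momKer L₂ (t' / 2) :=
  calc momKer L₁ (t / 2) ⊆ momKer L₂ (t / 2) := h₁.momKer_subset (Kpos_anti h htt' h₂)
    _ ⊆ momKer L₂ (t' / 2) := h₂.2.momKer_mono (Nat.div_le_div_right htt')

/-- If `t ≤ t'`, `L₁` is generic in `K_{t,⪰}` and `L₂` is generic in
`K_{t',⪰}`, then `Ker M_{⌊t/2⌋}(L₁) ⊆ Ker M_{⌊t'/2⌋}(L₂)`, i.e. `N_t ⊆ N_{t'}`. -/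
theorem momKer_mono_of_generic {n m t t' : ℕ} (h : Fin m → MP n) (htt' : t ≤ t')
    (L₁ L₂ : Module.Dual ℝ (MP n)) (h₁ : Generic h t L₁) (h₂ : Generic h t' L₂) :
    momKer L₁ (t / 2) ⊆ momKer L₂ (t' / 2) :=
  momKer_mono_of_generic_general h htt' L₁ L₂ h₁ h₂.1
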